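/- The ordinary generating function Σ_{n≥2} #F_n^0 · t^n equals 2t²/(1 − 2t), and Σ_{n≥3} #F_n^1 · t^n equals 2t³/((1 − 2t)²(1 − 4t)), as identities of formal power series (equivalently, of functions on a neighborhood of 0). -/

import Mathlib

open scoped Classical

noncomputable def numKinks {n : ℕ} (π : Equiv.Perm (Fin n)) : ℕ :=
  (Finset.univ.filter (fun i : Fin n =>
    0 < (i : ℕ) ∧ ∀ j : Fin n, (j : ℕ) < (i : ℕ) →
      (π j : ℕ) + 1 ≠ (π i : ℕ) ∧ (π i : ℕ) + 1 ≠ (π j : ℕ))).card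

noncomputable def F (n d : ℕ) : ℕ :=
  (Finset.univ.filter (fun π : Equiv.Perm (Fin n) => numKinks π = d)).card

/-!
Read a permutation of `[n]` from left to right. The values seen so far form a union of maximal
intervals, and each new entry opens an interval, extends one, or merges two, according to whether
zero, one or two of its neighbouring values came before. The first entry and the kinks are the
openings. Since a single interval is left at the end, a permutation with `k` kinks has `k + 1`
openings, `k` merges and hence `n - 2 * k - 1` extensions.

Every permutation of `[n + 1]` arises in exactly one way by appending a last value `x` to a
permutation of `[n]` and shifting the values `≥ x` up. The appended entry is not a kink, and an old
entry becomes a kink exactly when it was an extension and `x` separates it from its earlier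
neighbour. Different extensions are separated by different `x`, so `n - 2 * k - 1` of the `n + 1`
choices of `x` create one kink and the other `2 * (k + 1)` create none. For
`G_d = ∑ F (n + 1) d Xⁿ` this recurrence reads `G_0 * (1 - 2 * X) = 1` and
`G_{d+1} * (1 - 2 * (d + 2) * X) = X * (X * d⁄dX G_d - 2 * d * G_d)`.
-/

open Equiv Finset

section EarlierNeighbours

variable {n : ℕ}

/-- The value `π i - 1` occurs before position `i`. -/
def HasPredBefore (π : Perm (Fin n)) (i : Fin n) : Prop :=
  ∃ j < i, (π j : ℕ) + 1 = π i

/-- The value `π i + 1` occurs before position `i`. -/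
def HasSuccBefore (π : Perm (Fin n)) (i : Fin n) : Prop :=
  ∃ j < i, (π i : ℕ) + 1 = π j

theorem hasPredBefore_iff_lt {π : Perm (Fin n)} {i j : Fin n} (h : (π j : ℕ) + 1 = π i) :
    HasPredBefore π i ↔ j < i := by
  refine ⟨fun ⟨k, hki, hk⟩ => ?_, fun hji => ⟨j, hji, h⟩⟩
  have hkj : k = j := π.injective (Fin.ext (by lia))
  exact hkj ▸ hki

theorem hasSuccBefore_iff_lt {π : Perm (Fin n)} {i j : Fin n} (h : (π i : ℕ) + 1 = π j) :
    HasSuccBefore π i ↔ j < i := by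
  refine ⟨fun ⟨k, hki, hk⟩ => ?_, fun hji => ⟨j, hji, h⟩⟩
  have hkj : k = j := π.injective (Fin.ext (by lia))
  exact hkj ▸ hki

theorem hasPredBefore_iff_not_hasSuccBefore {π : Perm (Fin n)} {i j : Fin n}
    (h : (π j : ℕ) + 1 = π i) : HasPredBefore π i ↔ ¬ HasSuccBefore π j := by
  have hij : i ≠ j := by rintro rfl; lia
  rw [hasPredBefore_iff_lt h, hasSuccBefore_iff_lt h, not_lt]
  exact hij.symm.le_iff_lt.symm

theorem hasPredBefore_or_hasSuccBefore_last (π : Perm (Fin (n + 2))) :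
    HasPredBefore π (Fin.last _) ∨ HasSuccBefore π (Fin.last _) := by
  have earlier {y : Fin (n + 2)} (hy : y ≠ π (Fin.last _)) : π.symm y < Fin.last _ :=
    Fin.lt_last_iff_ne_last.2 fun h => hy (by simp [← h])
  rcases Fin.eq_zero_or_eq_succ (π (Fin.last _)) with h | ⟨y, h⟩
  · exact .inr ⟨π.symm 1, earlier (by simp [h]), by simp [h]⟩
  · exact .inl ⟨π.symm y.castSucc, earlier (by simp [h, Fin.ext_iff]), by simp [h]⟩

theorem card_hasPredBefore_add_card_hasSuccBefore (π : Perm (Fin (n + 1))) :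
    #{i | HasPredBefore π i} + #{i | HasSuccBefore π i} = n := by
  have pred_zero : ¬ HasPredBefore π (π.symm 0) := by
    rintro ⟨j, -, h⟩
    simp at h
  have succ_last : ¬ HasSuccBefore π (π.symm (Fin.last n)) := by
    rintro ⟨j, -, h⟩
    rw [apply_symm_apply, Fin.val_last] at h
    lia
  have adjacent (u : Fin n) :
      HasPredBefore π (π.symm u.succ) ↔ ¬ HasSuccBefore π (π.symm u.castSucc) :=
    hasPredBefore_iff_not_hasSuccBefore (by simp)
  calc #{i | HasPredBefore π i} + #{i | HasSuccBefore π i}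
    _ = ∑ v, (if HasPredBefore π (π.symm v) then 1 else 0) +
          ∑ v, (if HasSuccBefore π (π.symm v) then 1 else 0) := by
      rw [card_filter, card_filter, ← Equiv.sum_comp π.symm,
        ← Equiv.sum_comp π.symm fun i => if HasSuccBefore π i then 1 else 0]
    _ = ∑ u : Fin n, ((if HasPredBefore π (π.symm u.succ) then 1 else 0) +
          (if HasSuccBefore π (π.symm u.castSucc) then 1 else 0)) := by
      rw [Fin.sum_univ_succ, Fin.sum_univ_castSucc, if_neg pred_zero, if_neg succ_last, zero_add,
        add_zero, sum_add_distrib]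
    _ = ∑ _u : Fin n, 1 := by
      refine sum_congr rfl fun u _ => ?_
      rw [adjacent u]
      split_ifs <;> rfl
    _ = n := by simp

end EarlierNeighbours

section KinksAndExtensions

variable {n : ℕ}

/-- The positions of the kinks of `π`, so that `numKinks π` is their number. -/
noncomputable def kinks (π : Perm (Fin n)) : Finset (Fin n) :=
  {i | 0 < (i : ℕ) ∧ ¬ HasPredBefore π i ∧ ¬ HasSuccBefore π i}

/-- The positions whose entry has exactly one of its two neighbouring values before it, and so
extends an interval of earlier values. -/
noncomputable def extensions (π : Perm (Fin n)) : Finset (Fin n) :=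
  {i | Xor (HasPredBefore π i) (HasSuccBefore π i)}

/-- For an extension `i`, the value whose insertion separates `π i` from its earlier neighbour.
Nothing is claimed about positions that are not extensions. -/
noncomputable def separatingValue (π : Perm (Fin n)) (i : Fin n) : Fin (n + 1) :=
  if HasPredBefore π i then (π i).castSucc else (π i).succ

theorem mem_kinks {π : Perm (Fin n)} {i : Fin n} :
    i ∈ kinks π ↔ 0 < (i : ℕ) ∧ ¬ HasPredBefore π i ∧ ¬ HasSuccBefore π i := by
  simp [kinks]

theorem mem_extensions {π : Perm (Fin n)} {i : Fin n} :
    i ∈ extensions π ↔ Xor (HasPredBefore π i) (HasSuccBefore π i) := by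
  simp [extensions]

theorem card_kinks (π : Perm (Fin n)) : #(kinks π) = numKinks π := by
  unfold kinks numKinks HasPredBefore HasSuccBefore
  congr 1
  ext i
  simp only [mem_filter, mem_univ, true_and, not_exists, not_and, Fin.lt_def, ← forall_and]

theorem card_not_hasPredBefore_not_hasSuccBefore (π : Perm (Fin (n + 1))) :
    #{i | ¬ HasPredBefore π i ∧ ¬ HasSuccBefore π i} = numKinks π + 1 := by
  have first : ¬ HasPredBefore π 0 ∧ ¬ HasSuccBefore π 0 := by
    simp [HasPredBefore, HasSuccBefore]
  rw [← card_kinks, kinks, Fin.card_filter_univ_succ, if_pos first, Fin.card_filter_univ_succ]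
  simp

theorem card_extensions (π : Perm (Fin (n + 1))) :
    #(extensions π) + 2 * (numKinks π + 1) = n + 2 := by
  have weights (i : Fin (n + 1)) :
      (if Xor (HasPredBefore π i) (HasSuccBefore π i) then 1 else 0) +
        2 * (if ¬ HasPredBefore π i ∧ ¬ HasSuccBefore π i then 1 else 0) +
        ((if HasPredBefore π i then 1 else 0) + (if HasSuccBefore π i then 1 else 0)) = 2 := by
    by_cases hp : HasPredBefore π i <;> by_cases hs : HasSuccBefore π i <;> simp [hp, hs]
  have total := sum_congr rfl fun i (_ : i ∈ univ) => weights i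
  simp only [sum_add_distrib, ← mul_sum, ← card_filter, sum_const, card_univ, Fintype.card_fin,
    smul_eq_mul, card_not_hasPredBefore_not_hasSuccBefore,
    card_hasPredBefore_add_card_hasSuccBefore] at total
  rw [extensions]
  lia

theorem separatingValue_injOn_extensions (π : Perm (Fin n)) :
    Set.InjOn (separatingValue π) (extensions π) := by
  have no_clash {i j : Fin n} (hi : HasPredBefore π i) (hj : Xor (HasPredBefore π j)
      (HasSuccBefore π j)) (hj' : ¬ HasPredBefore π j) : (π i).castSucc ≠ (π j).succ := by
    intro h
    have hval : (π j : ℕ) + 1 = π i := by simpa using (congrArg Fin.val h).symm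
    exact (hasPredBefore_iff_not_hasSuccBefore hval).1 hi (hj.or.resolve_left hj')
  intro i hi j hj h
  rw [mem_coe, mem_extensions] at hi hj
  unfold separatingValue at h
  split_ifs at h with hpi hpj hpj
  · exact π.injective (Fin.castSucc_injective _ h)
  · exact (no_clash hpi hj hpj h).elim
  · exact (no_clash hpj hi hpi h.symm).elim
  · exact π.injective (Fin.succ_injective _ h)

end KinksAndExtensions

section Append

variable {n : ℕ}

/-- The permutation of `Fin (n + 1)` whose last value is `x` and whose other values are ordered as
in `π`: the values of `π` that are at least `x` are shifted up by one. -/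
def appendValue (π : Perm (Fin n)) (x : Fin (n + 1)) : Perm (Fin (n + 1)) :=
  (finSuccEquiv' (Fin.last n)).trans ((optionCongr π).trans (finSuccEquiv' x).symm)

@[simp]
theorem appendValue_last (π : Perm (Fin n)) (x : Fin (n + 1)) :
    appendValue π x (Fin.last n) = x := by
  simp [appendValue]

@[simp]
theorem appendValue_castSucc (π : Perm (Fin n)) (x : Fin (n + 1)) (i : Fin n) :
    appendValue π x i.castSucc = x.succAbove (π i) := by
  simp [appendValue, finSuccEquiv'_last_apply_castSucc]

theorem appendValue_bijective (n : ℕ) :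
    Function.Bijective fun p : Perm (Fin n) × Fin (n + 1) => appendValue p.1 p.2 := by
  refine (Fintype.bijective_iff_injective_and_card _).2 ⟨?_, ?_⟩
  · rintro ⟨π, x⟩ ⟨ρ, y⟩ h
    obtain rfl : x = y := by simpa using DFunLike.congr_fun h (Fin.last n)
    obtain rfl : π = ρ := by
      ext1 i
      simpa using DFunLike.congr_fun h i.castSucc
    rfl
  · simp [Fintype.card_perm, Nat.factorial_succ, mul_comm]

theorem succAbove_add_one_eq_succAbove_iff (x : Fin (n + 1)) (a b : Fin n) :
    (x.succAbove a : ℕ) + 1 = x.succAbove b ↔ (a : ℕ) + 1 = b ∧ (b : ℕ) ≠ x := by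
  simp only [Fin.succAbove, Fin.lt_def]
  split_ifs <;> simp only [Fin.val_castSucc, Fin.val_succ] at * <;> lia

theorem hasPredBefore_appendValue_castSucc (π : Perm (Fin n)) (x : Fin (n + 1)) (i : Fin n) :
    HasPredBefore (appendValue π x) i.castSucc ↔ HasPredBefore π i ∧ (π i).castSucc ≠ x := by
  simp only [HasPredBefore, Fin.exists_fin_succ', appendValue_castSucc,
    Fin.castSucc_lt_castSucc_iff, succAbove_add_one_eq_succAbove_iff,
    (Fin.castSucc_lt_last i).not_gt, Fin.ext_iff, Fin.val_castSucc, ne_eq]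
  grind

theorem hasSuccBefore_appendValue_castSucc (π : Perm (Fin n)) (x : Fin (n + 1)) (i : Fin n) :
    HasSuccBefore (appendValue π x) i.castSucc ↔ HasSuccBefore π i ∧ (π i).succ ≠ x := by
  simp only [HasSuccBefore, Fin.exists_fin_succ', appendValue_castSucc,
    Fin.castSucc_lt_castSucc_iff, succAbove_add_one_eq_succAbove_iff,
    (Fin.castSucc_lt_last i).not_gt, Fin.ext_iff, Fin.val_succ, ne_eq]
  grind

theorem castSucc_mem_kinks_appendValue (π : Perm (Fin n)) (x : Fin (n + 1)) (i : Fin n) :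
    i.castSucc ∈ kinks (appendValue π x) ↔
      i ∈ kinks π ∨ i ∈ extensions π ∧ separatingValue π i = x := by
  have pos_of_pred : HasPredBefore π i → 0 < (i : ℕ) := fun ⟨_, hj, _⟩ => by lia
  have pos_of_succ : HasSuccBefore π i → 0 < (i : ℕ) := fun ⟨_, hj, _⟩ => by lia
  have castSucc_ne_succ : (π i).castSucc ≠ (π i).succ := Fin.castSucc_lt_succ.ne
  simp only [mem_kinks, mem_extensions, separatingValue,
    hasPredBefore_appendValue_castSucc, hasSuccBefore_appendValue_castSucc, Fin.val_castSucc, Xor]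
  grind

theorem kinks_appendValue (π : Perm (Fin (n + 1))) (x : Fin (n + 2)) :
    kinks (appendValue π x) =
      (kinks π ∪ {i ∈ extensions π | separatingValue π i = x}).map Fin.castSuccEmb := by
  ext i
  induction i using Fin.lastCases with
  | last =>
    have := hasPredBefore_or_hasSuccBefore_last (appendValue π x)
    have not_kink : Fin.last _ ∉ kinks (appendValue π x) := by
      rw [mem_kinks]
      tauto
    simp [not_kink]
  | cast i => simp [castSucc_mem_kinks_appendValue]

theorem numKinks_appendValue (π : Perm (Fin (n + 1))) (x : Fin (n + 2)) :
    numKinks (appendValue π x) =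
      numKinks π + if x ∈ (extensions π).image (separatingValue π) then 1 else 0 := by
  have disj : Disjoint (kinks π) {i ∈ extensions π | separatingValue π i = x} :=
    disjoint_left.2 fun i hk he =>
      (mem_extensions.1 (mem_filter.1 he).1).or.elim (mem_kinks.1 hk).2.1 (mem_kinks.1 hk).2.2
  rw [← card_kinks, ← card_kinks, kinks_appendValue, card_map, card_union_of_disjoint disj]
  congr 1
  split_ifs with hx
  · obtain ⟨i, hi, rfl⟩ := mem_image.1 hx
    refine card_eq_one.2 ⟨i, eq_singleton_iff_unique_mem.2 ⟨by simp [hi], fun j hj => ?_⟩⟩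
    obtain ⟨hj, hji⟩ := mem_filter.1 hj
    exact separatingValue_injOn_extensions π hj hi hji
  · refine card_eq_zero.2 (filter_eq_empty_iff.2 fun i hi hix => hx ?_)
    exact mem_image.2 ⟨i, hi, hix⟩

theorem card_numKinks_appendValue_eq_succ (π : Perm (Fin (n + 1))) :
    #{x | numKinks (appendValue π x) = numKinks π + 1} + 2 * numKinks π = n := by
  have created : ({x | numKinks (appendValue π x) = numKinks π + 1} : Finset (Fin (n + 2))) =
      (extensions π).image (separatingValue π) := by
    ext x
    simp [numKinks_appendValue]
  rw [created, card_image_of_injOn (separatingValue_injOn_extensions π)]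
  have := card_extensions π
  lia

theorem card_numKinks_appendValue_eq_self (π : Perm (Fin (n + 1))) :
    #{x | numKinks (appendValue π x) = numKinks π} = 2 * (numKinks π + 1) := by
  have not_created : ({x | numKinks (appendValue π x) = numKinks π} : Finset (Fin (n + 2))) =
      ({x | ¬ numKinks (appendValue π x) = numKinks π + 1} : Finset (Fin (n + 2))) := by
    ext x
    simp only [numKinks_appendValue, mem_filter, mem_univ, true_and]
    split_ifs <;> simp
  have total := card_filter_add_card_filter_not (s := univ)
    fun x => numKinks (appendValue π x) = numKinks π + 1
  rw [card_univ, Fintype.card_fin] at total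
  have := card_numKinks_appendValue_eq_succ π
  rw [not_created]
  lia

end Append

section Recurrence

theorem F_succ_eq_sum_card (n d : ℕ) :
    F (n + 1) d = ∑ π : Perm (Fin n), #{x | numKinks (appendValue π x) = d} := by
  simp_rw [F, card_filter]
  rw [← (appendValue_bijective n).sum_comp fun π => if numKinks π = d then 1 else 0,
    Fintype.sum_prod_type]

theorem F_one_zero : F 1 0 = 1 := by
  simp [F, numKinks]

theorem F_one_succ (d : ℕ) : F 1 (d + 1) = 0 := by
  simp [F, numKinks]

theorem F_add_two_zero (n : ℕ) : F (n + 2) 0 = 2 * F (n + 1) 0 := by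
  rw [F_succ_eq_sum_card, F, card_filter, mul_sum]
  refine sum_congr rfl fun π _ => ?_
  by_cases h : numKinks π = 0
  · simpa [h] using card_numKinks_appendValue_eq_self π
  · simp [numKinks_appendValue, h]

theorem F_add_two_succ (n d : ℕ) :
    F (n + 2) (d + 1) + 2 * d * F (n + 1) d =
      2 * (d + 2) * F (n + 1) (d + 1) + n * F (n + 1) d := by
  rw [F_succ_eq_sum_card]
  simp only [F, card_filter _ univ, mul_sum, ← sum_add_distrib]
  refine sum_congr rfl fun π _ => ?_
  simp only [← card_filter]
  obtain rfl | hd := eq_or_ne (numKinks π) d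
  · simpa using card_numKinks_appendValue_eq_succ π
  obtain hd' | hd' := eq_or_ne (numKinks π) (d + 1)
  · simpa [hd', add_assoc] using card_numKinks_appendValue_eq_self π
  have none_left (x : Fin (n + 2)) : numKinks (appendValue π x) ≠ d + 1 := by
    rw [numKinks_appendValue]
    split_ifs <;> lia
  simp [hd, hd', none_left]

theorem F_two_one : F 2 1 = 0 := by
  simpa [F_one_succ] using F_add_two_succ 0 0

end Recurrence

section GeneratingFunction

open PowerSeries

/-- The generating function of the permutations with `d` kinks, divided by `X`: the coefficient of
`Xⁿ` counts permutations of `n + 1` elements. The shift leaves out the empty permutation, for which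
the recurrence `F_add_two_succ` fails. -/
noncomputable def kinkSeries (d : ℕ) : ℚ⟦X⟧ :=
  mk fun n => (F (n + 1) d : ℚ)

theorem coeff_X_mul_derivative {R : Type*} [CommSemiring R] (f : R⟦X⟧) (n : ℕ) :
    coeff n (X * d⁄dX R f) = n * coeff n f := by
  cases n with
  | zero => simp
  | succ n => simp [coeff_succ_X_mul, coeff_derivative, mul_comm]

theorem kinkSeries_zero_mul : kinkSeries 0 * (1 - 2 * X) = 1 := by
  suffices h : kinkSeries 0 = 1 + X * (C 2 * kinkSeries 0) by
    rw [map_ofNat] at h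
    linear_combination h
  ext n
  cases n with
  | zero => simp [kinkSeries, F_one_zero]
  | succ n => simp [kinkSeries, coeff_succ_X_mul, F_add_two_zero, coeff_one]

theorem kinkSeries_succ_mul (d : ℕ) :
    kinkSeries (d + 1) * (1 - 2 * ((d : ℚ⟦X⟧) + 2) * X) =
      X * (X * d⁄dX ℚ (kinkSeries d) - 2 * (d : ℚ⟦X⟧) * kinkSeries d) := by
  suffices h : kinkSeries (d + 1) = X * (C (2 * (d + 2) : ℚ) * kinkSeries (d + 1) +
      (X * d⁄dX ℚ (kinkSeries d) - C (2 * d : ℚ) * kinkSeries d)) by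
    simp only [map_mul, map_add, map_ofNat, map_natCast] at h
    linear_combination h
  ext n
  cases n with
  | zero => simp [kinkSeries, F_one_succ]
  | succ n =>
    have recurrence : (F (n + 2) (d + 1) + 2 * d * F (n + 1) d : ℚ) =
        2 * (d + 2) * F (n + 1) (d + 1) + n * F (n + 1) d := mod_cast F_add_two_succ n d
    simp only [coeff_succ_X_mul, map_add, map_sub, coeff_C_mul, coeff_X_mul_derivative, kinkSeries,
      coeff_mk]
    linear_combination recurrence

theorem derivative_kinkSeries_zero_mul : d⁄dX ℚ (kinkSeries 0) * (1 - 2 * X) ^ 2 = 2 := by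
  have h := congrArg (d⁄dX ℚ) kinkSeries_zero_mul
  have derivative_two : d⁄dX ℚ (2 : ℚ⟦X⟧) = 0 := (d⁄dX ℚ).map_natCast 2
  simp only [Derivation.leibniz, map_sub, derivative_X, derivative_two, Derivation.map_one_eq_zero,
    smul_eq_mul] at h
  linear_combination (1 - 2 * X) * h + 2 * kinkSeries_zero_mul

theorem kinkSeries_one_mul : kinkSeries 1 * ((1 - 2 * X) ^ 2 * (1 - 4 * X)) = 2 * X ^ 2 := by
  have h := kinkSeries_succ_mul 0
  rw [Nat.cast_zero, zero_add] at h
  linear_combination (1 - 2 * X) ^ 2 * h + X ^ 2 * derivative_kinkSeries_zero_mul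

theorem mk_F_zero_eq :
    (mk fun n => if 2 ≤ n then (F n 0 : ℚ) else 0) = X * (kinkSeries 0 - 1) := by
  ext (_ | _ | n) <;> simp [kinkSeries, coeff_succ_X_mul, F_one_zero, coeff_one]

theorem mk_F_one_eq :
    (mk fun n => if 3 ≤ n then (F n 1 : ℚ) else 0) = X * kinkSeries 1 := by
  ext (_ | _ | _ | n) <;> simp [kinkSeries, coeff_succ_X_mul, F_one_succ, F_two_one]

end GeneratingFunction

open PowerSeries in
theorem gf_zero_and_one_kinks :
    (PowerSeries.mk fun n => if 2 ≤ n then (F n 0 : ℚ) else 0) * (1 - 2 * PowerSeries.X)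
      = 2 * PowerSeries.X ^ 2 ∧
    (PowerSeries.mk fun n => if 3 ≤ n then (F n 1 : ℚ) else 0)
        * ((1 - 2 * PowerSeries.X) ^ 2 * (1 - 4 * PowerSeries.X))
      = 2 * PowerSeries.X ^ 3 := by
  rw [mk_F_zero_eq, mk_F_one_eq]
  constructor
  · linear_combination X * kinkSeries_zero_mul
  · linear_combination X * kinkSeries_one_mul
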